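/- arXiv:2303.09505 — 6 statements merged into one kernel-verified Lean document; each statement's English description precedes it below -/
import Mathlib

section
/- Assume V = V*, B_r = A_r* for all r, A_R is invertible, and E ∈ ℝ. Then for every nonzero λ₀ ∈ ℂ and every m ≥ 1: λ₀ is a root of multiplicity m of the characteristic polynomial of the companion matrix C_E if and only if 1/conj(λ₀) is a root of multiplicity m. In particular, λ₀ is an eigenvalue of C_E iff 1/conj(λ₀) is, and in that case E is an eigenvalue of both Bloch Hamiltonians 𝐇(λ₀) and 𝐇(1/conj(λ₀)). -/
/-!
STATEMENT 4 (mode duality from self-adjointness).  For a self-adjoint Hamiltonian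
(`V = V*`, `B_r = A_r*`) with `A_R` invertible and real energy `E`: a nonzero `λ₀`
is a root of multiplicity `m ≥ 1` of the characteristic polynomial of the companion
matrix `C_E` iff `1/conj(λ₀)` is; in particular `λ₀` is an eigenvalue of `C_E` iff
`1/conj(λ₀)` is, and then `E` is an eigenvalue of both `𝐇(λ₀)` and `𝐇(1/conj(λ₀))`.
-/

open Matrix Finset

/-- The Bloch Hamiltonian `𝐇(λ) = V + ∑_{r=1}^R (λ^{−r}·B_r + λ^r·A_r)`. -/
noncomputable def bloch (R d : ℕ) (V : Matrix (Fin d) (Fin d) ℂ)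
    (A B : ℕ → Matrix (Fin d) (Fin d) ℂ) (z : ℂ) : Matrix (Fin d) (Fin d) ℂ :=
  V + ∑ r ∈ Finset.Icc 1 R, (z⁻¹ ^ r • B r + z ^ r • A r)

/-- The `j`-th block (0-indexed, `j = 0, …, 2R−1`) of the last block row of the
companion matrix: `(−A_R⁻¹ B_R, …, −A_R⁻¹ B_1, −A_R⁻¹ V_E, −A_R⁻¹ A_1, …, −A_R⁻¹ A_{R−1})`. -/
noncomputable def companionLastRow (R d : ℕ) (V : Matrix (Fin d) (Fin d) ℂ)
    (A B : ℕ → Matrix (Fin d) (Fin d) ℂ) (E : ℂ) (j : ℕ) : Matrix (Fin d) (Fin d) ℂ :=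
  if j < R then -((A R)⁻¹ * B (R - j))
  else if j = R then -((A R)⁻¹ * (V - E • (1 : Matrix (Fin d) (Fin d) ℂ)))
  else -((A R)⁻¹ * A (j - R))

/-- The companion matrix `C_E ∈ M_{2Rd}(ℂ)`, realized as a matrix indexed by
`Fin (2R) × Fin d` (block index × intra-block index): the `(i, i+1)` blocks are `1_d`
for `i = 0, …, 2R−2`, the last block row is `companionLastRow`, all other blocks `0`. -/
noncomputable def companion (R d : ℕ) (V : Matrix (Fin d) (Fin d) ℂ)
    (A B : ℕ → Matrix (Fin d) (Fin d) ℂ) (E : ℂ) :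
    Matrix (Fin (2 * R) × Fin d) (Fin (2 * R) × Fin d) ℂ :=
  fun p q =>
    if (p.1 : ℕ) + 1 = 2 * R then companionLastRow R d V A B E (q.1 : ℕ) p.2 q.2
    else if (q.1 : ℕ) = (p.1 : ℕ) + 1 then (1 : Matrix (Fin d) (Fin d) ℂ) p.2 q.2
    else 0

/-- The block companion matrix with `N` block columns and last block row `c 0, …, c (N - 1)`. -/
def blockCompanion (N d : ℕ) (c : ℕ → Matrix (Fin d) (Fin d) ℂ) :
    Matrix (Fin N × Fin d) (Fin N × Fin d) ℂ :=
  fun p q =>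
    if (p.1 : ℕ) + 1 = N then c q.1 p.2 q.2
    else if (q.1 : ℕ) = (p.1 : ℕ) + 1 then (1 : Matrix (Fin d) (Fin d) ℂ) p.2 q.2
    else 0

/-- The block lower triangular Toeplitz matrix with blocks `w ^ (i - j)` for `j ≤ i`. -/
def powerToeplitz (N d : ℕ) (w : ℂ) : Matrix (Fin N × Fin d) (Fin N × Fin d) ℂ :=
  Matrix.kronecker (Matrix.of fun i j : Fin N => if j ≤ i then w ^ ((i : ℕ) - (j : ℕ)) else 0) 1

theorem det_powerToeplitz (N d : ℕ) (w : ℂ) : (powerToeplitz N d w).det = 1 := by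
  rw [powerToeplitz, Matrix.kronecker, Matrix.det_kronecker, Matrix.det_of_isLowerTriangular]
  · simp
  · intro i j hij
    have : i < j := by simpa using hij
    simp [not_le.mpr this]

theorem powerToeplitz_apply (N d : ℕ) (w : ℂ) (p q : Fin N × Fin d) :
    powerToeplitz N d w p q =
      if q.1 ≤ p.1 ∧ p.2 = q.2 then w ^ ((p.1 : ℕ) - (q.1 : ℕ)) else 0 := by
  simp only [powerToeplitz, Matrix.kronecker, kroneckerMap_apply, Matrix.of_apply,
    Matrix.one_apply]
  split_ifs <;> simp_all

theorem blockCompanion_mul_apply_castSucc (n d : ℕ) (c : ℕ → Matrix (Fin d) (Fin d) ℂ)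
    (M : Matrix (Fin (n + 1) × Fin d) (Fin (n + 1) × Fin d) ℂ) (i : Fin n) (a : Fin d)
    (q : Fin (n + 1) × Fin d) :
    (blockCompanion (n + 1) d c * M) (i.castSucc, a) q = M (i.succ, a) q := by
  rw [Matrix.mul_apply, Finset.sum_eq_single (i.succ, a)]
  · simp [blockCompanion, i.isLt.ne]
  · rintro ⟨j, b⟩ - hjb
    have : ¬ ((j : ℕ) = i + 1 ∧ a = b) := by
      rintro ⟨h, rfl⟩
      exact hjb (by simp [Prod.ext_iff, Fin.ext_iff, h])
    simp only [blockCompanion, Matrix.one_apply]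
    have hi := i.isLt.ne
    split_ifs <;> simp_all
  · simp

theorem blockCompanion_mul_powerToeplitz_last (n d : ℕ) (c : ℕ → Matrix (Fin d) (Fin d) ℂ)
    (w : ℂ) (a b : Fin d) :
    (blockCompanion (n + 1) d c * powerToeplitz (n + 1) d w) (Fin.last n, a) (0, b) =
      (∑ j ∈ range (n + 1), w ^ j • c j) a b := by
  rw [Matrix.mul_apply, Fintype.sum_prod_type, Matrix.sum_apply, Finset.sum_range]
  refine Finset.sum_congr rfl fun j _ => ?_
  rw [Finset.sum_eq_single b]
  · simp [blockCompanion, powerToeplitz_apply, mul_comm]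
  · intro e _ he
    simp [powerToeplitz_apply, he]
  · simp

/-- The characteristic matrix of a block companion matrix, times a unimodular matrix and with its
block columns rotated, is block lower triangular with diagonal blocks `-1, …, -1` and the matrix
polynomial attached to `c`. -/
theorem det_scalar_sub_blockCompanion_succ (n d : ℕ) (c : ℕ → Matrix (Fin d) (Fin d) ℂ) :
    ∃ k : ℂ, k ≠ 0 ∧ ∀ w : ℂ,
      (Matrix.scalar (Fin (n + 1) × Fin d) w - blockCompanion (n + 1) d c).det =
        k * (w ^ (n + 1) • (1 : Matrix (Fin d) (Fin d) ℂ) -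
          ∑ j ∈ range (n + 1), w ^ j • c j).det := by
  set σ : Equiv.Perm (Fin (n + 1) × Fin d) :=
    Equiv.prodCongr (finRotate (n + 1)) (Equiv.refl _) with hσ
  set s : ℂ := ((Equiv.Perm.sign σ : ℤ) : ℂ) with hs
  have hss : s * s = 1 := by
    rw [hs, ← Int.cast_mul, Int.units_coe_mul_self, Int.cast_one]
  refine ⟨s * ((-1 : Matrix (Fin d) (Fin d) ℂ).det) ^ n, ?_, fun w => ?_⟩
  · refine mul_ne_zero (fun h => by simp [h] at hss) (pow_ne_zero _ ?_)
    simp [Matrix.det_neg]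
  set M := (Matrix.scalar (Fin (n + 1) × Fin d) w - blockCompanion (n + 1) d c) *
    powerToeplitz (n + 1) d w with hM
  have hM_apply (p q) : M p q = w * powerToeplitz (n + 1) d w p q -
      (blockCompanion (n + 1) d c * powerToeplitz (n + 1) d w) p q := by
    rw [hM, sub_mul, Matrix.sub_apply, Matrix.scalar_apply, Matrix.diagonal_mul]
  have hMdet : (Matrix.scalar (Fin (n + 1) × Fin d) w - blockCompanion (n + 1) d c).det =
      s * (M.submatrix id σ).det := by
    rw [Matrix.det_permute', ← mul_assoc, ← hs, hss, one_mul, hM, Matrix.det_mul,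
      det_powerToeplitz, mul_one]
  have hrow (i : Fin n) (a : Fin d) (j : Fin (n + 1)) (b : Fin d) :
      M.submatrix id σ (i.castSucc, a) (j, b) = if j = i.castSucc ∧ a = b then -1 else 0 := by
    rw [Matrix.submatrix_apply, id, hM_apply, blockCompanion_mul_apply_castSucc]
    simp only [powerToeplitz_apply, hσ, Equiv.prodCongr_apply, Prod.map, Equiv.refl_apply]
    by_cases hab : a = b
    swap
    · simp [hab]
    induction j using Fin.lastCases with
    | last =>
      have : Fin.last n ≠ i.castSucc := (Fin.castSucc_lt_last i).ne'
      rw [finRotate_last]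
      simp [hab, this, ← pow_succ']
    | cast j =>
      have hr : finRotate (n + 1) j.castSucc = j.succ := by
        simp
      simp only [hr, hab, and_true, Fin.castSucc_inj]
      rcases lt_trichotomy j i with h | h | h
      · have h1 : j.succ ≤ i.castSucc := by rw [Fin.le_def]; exact h
        have h2 : (i : ℕ) + 1 - (j + 1) = (i - (j + 1)) + 1 := by
          have : (j : ℕ) < i := h
          omega
        have h3 : j.succ ≤ i.succ := Fin.succ_le_succ_iff.mpr h.le
        rw [if_pos h1, if_pos h3, if_neg h.ne, Fin.val_succ, Fin.val_succ, h2, pow_succ',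
          Fin.val_castSucc, sub_self]
      · subst h
        simp
      · have h1 : ¬ j.succ ≤ i.castSucc := fun h' => h.not_ge (by
          rw [Fin.le_def] at h' ⊢; simp at h'; omega)
        have h3 : ¬ j.succ ≤ i.succ := fun h' => h.not_ge (Fin.succ_le_succ_iff.mp h')
        rw [if_neg h1, if_neg h3, if_neg h.ne', mul_zero, sub_zero]
  have hlast (a b : Fin d) : M.submatrix id σ (Fin.last n, a) (Fin.last n, b) =
      (w ^ (n + 1) • (1 : Matrix (Fin d) (Fin d) ℂ) -
          ∑ j ∈ range (n + 1), w ^ j • c j) a b := by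
    have hr : finRotate (n + 1) (Fin.last n) = 0 := finRotate_last
    rw [Matrix.submatrix_apply, id, hM_apply]
    simp only [hσ, Equiv.prodCongr_apply, Prod.map, Equiv.refl_apply, hr]
    rw [blockCompanion_mul_powerToeplitz_last, powerToeplitz_apply, Matrix.sub_apply]
    simp [Matrix.one_apply, pow_succ']
  have hblock (k : Fin (n + 1)) : ((M.submatrix id σ).toSquareBlock
      (fun p => OrderDual.toDual p.1) (OrderDual.toDual k)).det =
      (Matrix.of fun a b => M.submatrix id σ (k, a) (k, b)).det := by
    let e : Fin d ≃ {p : Fin (n + 1) × Fin d // OrderDual.toDual p.1 = OrderDual.toDual k} :=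
      { toFun := fun a => ⟨(k, a), rfl⟩
        invFun := fun p => p.1.2
        left_inv := fun a => rfl
        right_inv := by rintro ⟨⟨j, a⟩, h⟩; cases h; rfl }
    rw [← Matrix.det_submatrix_equiv_self e]
    rfl
  have htri : (M.submatrix id σ).BlockTriangular (fun p => OrderDual.toDual p.1) := by
    rintro ⟨i, a⟩ ⟨j, b⟩ hij
    have hij : i < j := hij
    induction i using Fin.lastCases with
    | last => exact absurd hij (Fin.le_last j).not_gt
    | cast i => rw [hrow, if_neg fun h => hij.ne' h.1]
  rw [hMdet, htri.det_fintype, ← OrderDual.toDual.prod_comp, Fin.prod_univ_castSucc]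
  simp only [hblock]
  have h1 (i : Fin n) : (Matrix.of fun a b =>
      M.submatrix id σ (i.castSucc, a) (i.castSucc, b)) = (-1 : Matrix (Fin d) (Fin d) ℂ) := by
    ext a b
    rw [Matrix.of_apply, hrow, Matrix.neg_apply, Matrix.one_apply]
    split_ifs <;> simp_all
  have h2 : (Matrix.of fun a b => M.submatrix id σ (Fin.last n, a) (Fin.last n, b)) =
      (w ^ (n + 1) • (1 : Matrix (Fin d) (Fin d) ℂ) - ∑ j ∈ range (n + 1), w ^ j • c j) := by
    ext a b
    rw [Matrix.of_apply, hlast]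
  simp only [h1, h2, Finset.prod_const, Finset.card_univ, Fintype.card_fin, mul_assoc]

theorem charpoly_blockCompanion_eval (N d : ℕ) (hN : 1 ≤ N)
    (c : ℕ → Matrix (Fin d) (Fin d) ℂ) :
    ∃ k : ℂ, k ≠ 0 ∧ ∀ w : ℂ, (blockCompanion N d c).charpoly.eval w =
      k * (w ^ N • (1 : Matrix (Fin d) (Fin d) ℂ) - ∑ j ∈ range N, w ^ j • c j).det := by
  obtain ⟨n, rfl⟩ := Nat.exists_eq_add_of_le' hN
  simpa only [Matrix.eval_charpoly] using det_scalar_sub_blockCompanion_succ n d c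

theorem mul_companionLastRow_polynomial (R d : ℕ) (hR : 1 ≤ R) (V : Matrix (Fin d) (Fin d) ℂ)
    (A B : ℕ → Matrix (Fin d) (Fin d) ℂ) (hAR : IsUnit (A R).det) (E w : ℂ) (hw : w ≠ 0) :
    A R * (w ^ (2 * R) • (1 : Matrix (Fin d) (Fin d) ℂ) -
        ∑ j ∈ range (2 * R), w ^ j • companionLastRow R d V A B E j) =
      w ^ R • (bloch R d V A B w - E • (1 : Matrix (Fin d) (Fin d) ℂ)) := by
  have hcancel (X : Matrix (Fin d) (Fin d) ℂ) : A R * ((A R)⁻¹ * X) = X :=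
    Matrix.mul_nonsing_inv_cancel_left _ _ hAR
  have hBlow : ∑ j ∈ range R, A R * (w ^ j • companionLastRow R d V A B E j) =
      -∑ r ∈ Icc 1 R, w ^ R • w⁻¹ ^ r • B r := by
    rw [← Finset.sum_neg_distrib, ← Finset.sum_range_reflect, Finset.range_eq_Ico,
      Finset.sum_Ico_add_right_sub_eq (a := 0) (b := R) (c := 1) |>.symm, zero_add,
      ← Finset.Ico_succ_right_eq_Icc]
    refine Finset.sum_congr rfl fun r hr => ?_
    obtain ⟨h1, h2⟩ := Finset.mem_Ico.mp hr
    have h2 : r ≤ R := Nat.lt_succ_iff.mp h2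
    have hlt : R - 1 - (r - 1) < R := by omega
    have hsub : R - 1 - (r - 1) = R - r := by omega
    have hpow : w ^ R * w⁻¹ ^ r = w ^ (R - r) := by
      rw [pow_sub₀ w hw h2, inv_pow]
    rw [companionLastRow, if_pos hlt, hsub, Nat.sub_sub_self h2, smul_smul, hpow, smul_neg,
      mul_neg, Matrix.mul_smul, hcancel]
  have hAhigh : ∑ j ∈ range R, A R * (w ^ (R + j) • companionLastRow R d V A B E (R + j)) =
      w ^ (2 * R) • A R - w ^ R • (V - E • (1 : Matrix (Fin d) (Fin d) ℂ)) -
        ∑ r ∈ Icc 1 R, w ^ R • w ^ r • A r := by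
    have hsplit : ∑ r ∈ Icc 1 R, w ^ R • w ^ r • A r =
        ∑ r ∈ Ico 1 R, w ^ R • w ^ r • A r + w ^ R • w ^ R • A R := by
      rw [← Finset.Ico_succ_right_eq_Icc, Nat.succ_eq_succ, Nat.succ_eq_add_one,
        Finset.sum_Ico_succ_top hR]
    have hterm : ∑ j ∈ Ico 1 R, A R * (w ^ (R + j) • companionLastRow R d V A B E (R + j)) =
        -∑ r ∈ Ico 1 R, w ^ R • w ^ r • A r := by
      rw [← Finset.sum_neg_distrib]
      refine Finset.sum_congr rfl fun r hr => ?_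
      have h1 := (Finset.mem_Ico.mp hr).1
      rw [companionLastRow, if_neg (by omega), if_neg (by omega), Nat.add_sub_cancel_left,
        smul_smul, ← pow_add, smul_neg, mul_neg, Matrix.mul_smul, hcancel]
    rw [Finset.range_eq_Ico, Finset.sum_eq_sum_Ico_succ_bot hR, zero_add, hterm, hsplit, add_zero,
      companionLastRow, if_neg (lt_irrefl R), if_pos rfl, smul_neg, mul_neg, Matrix.mul_smul,
      hcancel, two_mul, pow_add, mul_smul]
    abel
  rw [mul_sub, Matrix.mul_smul, mul_one, Finset.mul_sum, two_mul, Finset.sum_range_add, hBlow,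
    hAhigh, bloch, Finset.sum_add_distrib, ← two_mul]
  simp only [smul_sub, smul_add, Finset.smul_sum]
  abel

/-- Up to a nonzero constant, the characteristic polynomial of the companion matrix is
`w ^ (R * d) * det (𝐇(w) - E)` away from the origin. -/
theorem charpoly_companion_eval (R d : ℕ) (hR : 1 ≤ R) (V : Matrix (Fin d) (Fin d) ℂ)
    (A B : ℕ → Matrix (Fin d) (Fin d) ℂ) (hAR : IsUnit (A R).det) (E : ℂ) :
    ∃ k : ℂ, k ≠ 0 ∧ ∀ w : ℂ, w ≠ 0 → (companion R d V A B E).charpoly.eval w =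
      k * (w ^ (R * d) *
        (bloch R d V A B w - E • (1 : Matrix (Fin d) (Fin d) ℂ)).det) := by
  obtain ⟨k, hk, h⟩ :=
    charpoly_blockCompanion_eval (2 * R) d (by omega) (companionLastRow R d V A B E)
  refine ⟨k * (A R).det⁻¹, mul_ne_zero hk (inv_ne_zero hAR.ne_zero), fun w hw => ?_⟩
  have hdet := congrArg Matrix.det (mul_companionLastRow_polynomial R d hR V A B hAR E w hw)
  rw [Matrix.det_mul, Matrix.det_smul, Fintype.card_fin, ← pow_mul] at hdet
  rw [← hdet, mul_assoc, inv_mul_cancel_left₀ hAR.ne_zero]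
  exact h w

theorem bloch_inv_conj (R d : ℕ) (V : Matrix (Fin d) (Fin d) ℂ)
    (A B : ℕ → Matrix (Fin d) (Fin d) ℂ) (hV : Vᴴ = V) (hB : ∀ r, B r = (A r)ᴴ) (w : ℂ) :
    bloch R d V A B ((starRingEnd ℂ) w)⁻¹ = (bloch R d V A B w)ᴴ := by
  simp only [bloch, Matrix.conjTranspose_add, Matrix.conjTranspose_sum,
    Matrix.conjTranspose_smul, hV, hB, Matrix.conjTranspose_conjTranspose, inv_inv, star_pow,
    star_inv₀, starRingEnd_apply]
  congr 1
  exact Finset.sum_congr rfl fun r _ => add_comm _ _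

theorem exists_mulVec_eq_smul_iff {ι : Type*} [Fintype ι] [DecidableEq ι] (M : Matrix ι ι ℂ)
    (μ : ℂ) : (∃ x : ι → ℂ, x ≠ 0 ∧ M.mulVec x = μ • x) ↔
      (M - μ • (1 : Matrix ι ι ℂ)).det = 0 := by
  rw [← Matrix.exists_mulVec_eq_zero_iff]
  simp only [Matrix.sub_mulVec, Matrix.smul_mulVec, Matrix.one_mulVec, sub_eq_zero]

theorem exists_mulVec_eq_smul_iff_isRoot_charpoly {ι : Type*} [Fintype ι] [DecidableEq ι]
    (M : Matrix ι ι ℂ) (μ : ℂ) :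
    (∃ x : ι → ℂ, x ≠ 0 ∧ M.mulVec x = μ • x) ↔ M.charpoly.eval μ = 0 := by
  rw [exists_mulVec_eq_smul_iff, Matrix.eval_charpoly, ← neg_sub _ M,
    Matrix.det_neg, Matrix.smul_one_eq_diagonal, Matrix.scalar_apply]
  simp

/-- Inverting a nonzero root does not decrease its multiplicity in the reversed polynomial. -/
theorem rootMultiplicity_le_rootMultiplicity_inv_reverse (p : Polynomial ℂ) (z : ℂ)
    (hz : z ≠ 0) :
    p.rootMultiplicity z ≤ p.reverse.rootMultiplicity z⁻¹ := by
  by_cases hp : p = 0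
  · simp [hp]
  rw [Polynomial.le_rootMultiplicity_iff (by simpa using hp)]
  obtain ⟨g, hg⟩ := Polynomial.pow_rootMultiplicity_dvd p z
  have hlin : (Polynomial.X - Polynomial.C z).reverse =
      Polynomial.C (-z) * (Polynomial.X - Polynomial.C z⁻¹) := by
    have hX : (Polynomial.X : Polynomial ℂ).reverse = 1 := by
      rw [← one_mul Polynomial.X, Polynomial.reverse_mul_X]
      simpa using Polynomial.reverse_C (1 : ℂ)
    have h := Polynomial.reverse_add_C (Polynomial.X : Polynomial ℂ) (-z)
    rw [hX, Polynomial.natDegree_X, pow_one, Polynomial.C_neg, ← sub_eq_add_neg] at h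
    rw [h, mul_sub, ← Polynomial.C_mul, neg_mul z, mul_inv_cancel₀ hz, Polynomial.C_neg,
      Polynomial.C_neg, Polynomial.C_1]
    ring
  have hpow (n : ℕ) : ((Polynomial.X - Polynomial.C z) ^ n).reverse =
      (Polynomial.X - Polynomial.C z).reverse ^ n := by
    induction n with
    | zero => simpa using Polynomial.reverse_C (1 : ℂ)
    | succ n ih => rw [pow_succ, pow_succ, Polynomial.reverse_mul_of_domain, ih]
  conv_rhs => rw [hg]
  rw [Polynomial.reverse_mul_of_domain, hpow, hlin, mul_pow]
  exact Dvd.intro_left _ rfl |>.mul_right _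

/-- A polynomial whose values satisfy a reflection law in the unit circle has root multiplicities
that do not decrease under that reflection. -/
theorem rootMultiplicity_le_of_reflection (p : Polynomial ℂ) (k : ℂ) (hk : k ≠ 0)
    (h : ∀ w : ℂ, w ≠ 0 → p.eval ((starRingEnd ℂ) w)⁻¹ * (starRingEnd ℂ) w ^ p.natDegree =
      k * (starRingEnd ℂ) (p.eval w)) (z : ℂ) (hz : z ≠ 0) :
    p.rootMultiplicity z ≤ p.rootMultiplicity ((starRingEnd ℂ) z)⁻¹ := by
  have hrev : p.reverse = Polynomial.C k * p.map (starRingEnd ℂ) := by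
    refine Polynomial.eq_of_infinite_eval_eq _ _
      ((Set.finite_singleton (0 : ℂ)).infinite_compl.mono fun v hv => ?_)
    have hv : v ≠ 0 := hv
    have hw : (starRingEnd ℂ) v ≠ 0 := by simpa using hv
    have h1 := h _ hw
    rw [Complex.conj_conj] at h1
    let _ : Invertible v⁻¹ := invertibleOfNonzero (inv_ne_zero hv)
    have h2 := Polynomial.eval₂_reverse_mul_pow (RingHom.id ℂ) v⁻¹ p
    simp only [invOf_eq_inv, inv_inv, Polynomial.eval₂_id] at h2
    rw [← h2, inv_pow, inv_mul_cancel_right₀ (pow_ne_zero _ hv)] at h1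
    rw [Set.mem_ofPred_eq, h1, Polynomial.eval_mul, Polynomial.eval_C]
    congr 1
    rw [← Polynomial.eval_map_apply, Complex.conj_conj]
  by_cases hp : p = 0
  · simp [hp]
  have hmap : p.map (starRingEnd ℂ) ≠ 0 :=
    (Polynomial.map_ne_zero_iff (starRingEnd ℂ).injective).mpr hp
  have hCmul : (Polynomial.C k * p.map (starRingEnd ℂ)).rootMultiplicity z⁻¹ =
      (p.map (starRingEnd ℂ)).rootMultiplicity z⁻¹ := by
    rw [Polynomial.rootMultiplicity_mul (mul_ne_zero (Polynomial.C_ne_zero.mpr hk) hmap),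
      Polynomial.rootMultiplicity_C, zero_add]
  refine (rootMultiplicity_le_rootMultiplicity_inv_reverse p z hz).trans_eq ?_
  rw [hrev, hCmul, ← map_inv₀,
    Polynomial.eq_rootMultiplicity_map (starRingEnd ℂ).injective, Polynomial.map_map,
    RingHom.ext (f := (starRingEnd ℂ).comp (starRingEnd ℂ)) (g := RingHom.id ℂ) Complex.conj_conj,
    Polynomial.map_id]

theorem companion_eigenvalue_duality (R d : ℕ) (hR : 1 ≤ R) (hd : 1 ≤ d)
    (V : Matrix (Fin d) (Fin d) ℂ) (A B : ℕ → Matrix (Fin d) (Fin d) ℂ)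
    (hV : Vᴴ = V) (hB : ∀ r, B r = (A r)ᴴ) (hAR : IsUnit (A R).det)
    (E : ℝ) (z : ℂ) (hz : z ≠ 0) :
    (∀ m : ℕ, 1 ≤ m →
      ((Matrix.charpoly (companion R d V A B (E : ℂ))).rootMultiplicity z = m ↔
        (Matrix.charpoly (companion R d V A B (E : ℂ))).rootMultiplicity
          ((starRingEnd ℂ) z)⁻¹ = m)) ∧
    ((∃ x : Fin (2 * R) × Fin d → ℂ, x ≠ 0 ∧
        (companion R d V A B (E : ℂ)).mulVec x = z • x) ↔
      (∃ x : Fin (2 * R) × Fin d → ℂ, x ≠ 0 ∧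
        (companion R d V A B (E : ℂ)).mulVec x = ((starRingEnd ℂ) z)⁻¹ • x)) ∧
    ((∃ x : Fin (2 * R) × Fin d → ℂ, x ≠ 0 ∧
        (companion R d V A B (E : ℂ)).mulVec x = z • x) →
      (∃ u : Fin d → ℂ, u ≠ 0 ∧ (bloch R d V A B z).mulVec u = (E : ℂ) • u) ∧
      (∃ u : Fin d → ℂ, u ≠ 0 ∧
        (bloch R d V A B ((starRingEnd ℂ) z)⁻¹).mulVec u = (E : ℂ) • u)) := by
  obtain ⟨k, hk, heval⟩ := charpoly_companion_eval R d hR V A B hAR E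
  set p := (companion R d V A B (E : ℂ)).charpoly with hp
  set z' := ((starRingEnd ℂ) z)⁻¹ with hz'
  have hz_refl : z' ≠ 0 := by simpa [hz'] using hz
  have hz_invol : ((starRingEnd ℂ) z')⁻¹ = z := by simp [hz']
  have hdet (w : ℂ) : (bloch R d V A B ((starRingEnd ℂ) w)⁻¹ - (E : ℂ) • 1).det =
      (starRingEnd ℂ) (bloch R d V A B w - (E : ℂ) • 1).det := by
    rw [bloch_inv_conj R d V A B hV hB, starRingEnd_apply, ← Matrix.det_conjTranspose]
    simp
  have hdeg : p.natDegree = R * d + R * d := by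
    rw [hp, Matrix.charpoly_natDegree_eq_dim]
    simp
    ring
  have hreflect (w : ℂ) (hw : w ≠ 0) :
      p.eval ((starRingEnd ℂ) w)⁻¹ * (starRingEnd ℂ) w ^ p.natDegree =
        k / (starRingEnd ℂ) k * (starRingEnd ℂ) (p.eval w) := by
    have hw' : (starRingEnd ℂ) w ≠ 0 := by simpa using hw
    have hk' : (starRingEnd ℂ) k ≠ 0 := by simpa using hk
    rw [heval w hw, heval _ (inv_ne_zero hw'), hdet, hdeg]
    simp only [map_mul, map_pow, inv_pow, pow_add]
    field_simp
  have hk' : k / (starRingEnd ℂ) k ≠ 0 := div_ne_zero hk (by simpa using hk)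
  have hmult : p.rootMultiplicity z = p.rootMultiplicity z' := by
    refine le_antisymm (rootMultiplicity_le_of_reflection p _ hk' hreflect z hz) ?_
    have h := rootMultiplicity_le_of_reflection p _ hk' hreflect z' hz_refl
    rwa [hz_invol] at h
  have hroot (w : ℂ) (hw : w ≠ 0) :
      p.eval w = 0 ↔ (bloch R d V A B w - (E : ℂ) • 1).det = 0 := by
    rw [heval w hw]
    simp [hk, hw]
  have hdual : (bloch R d V A B z - (E : ℂ) • 1).det = 0 ↔
      (bloch R d V A B z' - (E : ℂ) • 1).det = 0 := by
    rw [hz', hdet, map_eq_zero]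
  simp only [exists_mulVec_eq_smul_iff_isRoot_charpoly (companion R d V A B (E : ℂ)), ← hp,
    exists_mulVec_eq_smul_iff (bloch R d V A B _), hroot z hz, hroot z' hz_refl]
  exact ⟨fun m _ => by rw [hmult], hdual, fun h => ⟨h, hdual.mp h⟩⟩
end

section
/- Let R ≥ 1, d ≥ 1, let V, A_1, …, A_R, B_1, …, B_R ∈ M_d(ℂ) with A_R invertible, and let E ∈ ℂ. Then for every λ ∈ ℂ with λ ≠ 0, det(λ·1_{2Rd} − C_E) = λ^{R·d} · det(𝐇(λ) − E·1_d) / det(A_R). -/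
/-!
STATEMENT 6. For the companion matrix `C_E` of the order-`2R` recurrence
(with `A_R` invertible) and the Bloch Hamiltonian `𝐇(λ)`, one has, for `λ ≠ 0`,
`det(λ·1_{2Rd} − C_E) = λ^{R·d} · det(𝐇(λ) − E·1_d) / det(A_R)`.
-/

open Matrix Finset

section BlockCompanion

variable {n d : ℕ}

/-- The matrix `z - N`, where `N` is the `n × n` upper shift. -/
def scalarSubShift (n : ℕ) (z : ℂ) : Matrix (Fin n) (Fin n) ℂ :=
  Matrix.of fun i j => (if i = j then z else 0) - if (j : ℕ) = (i : ℕ) + 1 then 1 else 0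

lemma det_scalarSubShift (n : ℕ) (z : ℂ) : (scalarSubShift n z).det = z ^ n := by
  rw [Matrix.det_of_isUpperTriangular]
  · simp [scalarSubShift]
  · intro i j hij
    have h : (j : ℕ) < i := hij
    have h₁ : i ≠ j := by rintro rfl; exact lt_irrefl _ h
    have h₂ : (j : ℕ) ≠ (i : ℕ) + 1 := by omega
    simp [scalarSubShift, h₁, h₂]

/-- Block column of height `n` whose `i`-th block is the scalar matrix `x i`. -/
def scalarBlockColumn (d : ℕ) (x : Fin n → ℂ) : Matrix (Fin n × Fin d) (Fin d) ℂ :=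
  Matrix.of fun p k => x p.1 * (1 : Matrix (Fin d) (Fin d) ℂ) p.2 k

/-- Block row of width `n` with blocks `c 0, …, c (n - 1)`. -/
def blockRow (n : ℕ) (c : ℕ → Matrix (Fin d) (Fin d) ℂ) : Matrix (Fin d) (Fin n × Fin d) ℂ :=
  Matrix.of fun k q => c q.1 k q.2

lemma kronecker_one_mul_scalarBlockColumn (K : Matrix (Fin n) (Fin n) ℂ) (x : Fin n → ℂ) :
    Matrix.kronecker K (1 : Matrix (Fin d) (Fin d) ℂ) * scalarBlockColumn d x =
      scalarBlockColumn d (K *ᵥ x) := by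
  ext ⟨i, k⟩ l
  simp [Matrix.mul_apply, scalarBlockColumn, Fintype.sum_prod_type, Matrix.mulVec, dotProduct,
    Matrix.one_apply]

lemma blockRow_mul_scalarBlockColumn (c : ℕ → Matrix (Fin d) (Fin d) ℂ) (x : ℕ → ℂ) :
    blockRow n c * scalarBlockColumn d (fun i : Fin n => x i) =
      ∑ j ∈ Finset.range n, x j • c j := by
  rw [Finset.sum_range]
  ext k l
  simp [Matrix.mul_apply, blockRow, scalarBlockColumn, Fintype.sum_prod_type, Matrix.one_apply,
    Matrix.sum_apply, mul_comm]

lemma scalarSubShift_mulVec_geometric {z : ℂ} (hz : z ≠ 0) :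
    scalarSubShift n z *ᵥ (fun i => z⁻¹ ^ (n - (i : ℕ))) =
      fun i : Fin n => if (i : ℕ) + 1 = n then (1 : ℂ) else 0 := by
  ext i
  simp only [Matrix.mulVec, dotProduct, scalarSubShift, Matrix.of_apply, sub_mul, ite_mul,
    zero_mul, one_mul, Finset.sum_sub_distrib, Finset.sum_ite_eq, Finset.mem_univ, if_true]
  have hi := i.isLt
  split_ifs with h
  · have h' : n - (i : ℕ) = 1 := by omega
    rw [Finset.sum_eq_zero, h', pow_one, mul_inv_cancel₀ hz, sub_zero]
    intro j _
    exact if_neg (by omega)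
  · rw [Finset.sum_eq_single (⟨(i : ℕ) + 1, by omega⟩ : Fin n)]
    · have h' : n - (i : ℕ) = (n - ((i : ℕ) + 1)) + 1 := by omega
      rw [if_pos rfl, h', pow_succ]
      field_simp
      simp
    · intro j _ hj
      exact if_neg fun h => hj (Fin.ext h)
    · simp

/-- The determinant of a block companion matrix shifted by a nonzero scalar. -/
lemma det_shift_sub_blockRow (c : ℕ → Matrix (Fin d) (Fin d) ℂ) {z : ℂ} (hz : z ≠ 0) :
    (Matrix.kronecker (scalarSubShift n z) (1 : Matrix (Fin d) (Fin d) ℂ) -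
        scalarBlockColumn d (fun i : Fin n => if (i : ℕ) + 1 = n then 1 else 0) *
          blockRow n c).det =
      z ^ (n * d) * (1 - ∑ j ∈ Finset.range n, z⁻¹ ^ (n - j) • c j).det := by
  set K := Matrix.kronecker (scalarSubShift n z) (1 : Matrix (Fin d) (Fin d) ℂ) with hK
  have hdet : K.det = z ^ (n * d) := by
    simp [hK, Matrix.kronecker, Matrix.det_kronecker, det_scalarSubShift, pow_mul]
  have hunit : IsUnit K.det := by
    rw [hdet]; exact (pow_ne_zero _ hz).isUnit
  have hcol := kronecker_one_mul_scalarBlockColumn (d := d) (scalarSubShift n z)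
    (fun i => z⁻¹ ^ (n - (i : ℕ)))
  rw [scalarSubShift_mulVec_geometric hz] at hcol
  rw [sub_eq_add_neg, ← Matrix.mul_neg, Matrix.det_add_mul _ _ hunit, hdet, ← hcol,
    Matrix.neg_mul, Matrix.neg_mul, Matrix.mul_assoc, Matrix.nonsing_inv_mul_cancel_left _ _ hunit,
    blockRow_mul_scalarBlockColumn c (fun j => z⁻¹ ^ (n - j)), ← sub_eq_add_neg]

end BlockCompanion

lemma smul_one_sub_companion (R d : ℕ) (V : Matrix (Fin d) (Fin d) ℂ)
    (A B : ℕ → Matrix (Fin d) (Fin d) ℂ) (E z : ℂ) :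
    z • (1 : Matrix (Fin (2 * R) × Fin d) (Fin (2 * R) × Fin d) ℂ) - companion R d V A B E =
      Matrix.kronecker (scalarSubShift (2 * R) z) (1 : Matrix (Fin d) (Fin d) ℂ) -
        scalarBlockColumn d (fun i : Fin (2 * R) => if (i : ℕ) + 1 = 2 * R then 1 else 0) *
          blockRow (2 * R) (companionLastRow R d V A B E) := by
  ext ⟨i, k⟩ ⟨j, l⟩
  have hj := j.isLt
  by_cases h : (i : ℕ) + 1 = 2 * R
  · have h' : (j : ℕ) ≠ 2 * R := hj.ne
    by_cases hij : i = j <;>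
      simp [companion, scalarSubShift, scalarBlockColumn, blockRow, Matrix.mul_apply,
        Matrix.one_apply, h, h', hij]
  · by_cases hij : i = j
    · subst hij
      simp [companion, scalarSubShift, scalarBlockColumn, blockRow, Matrix.mul_apply,
        Matrix.one_apply, h]
    · by_cases hs : (j : ℕ) = (i : ℕ) + 1 <;> by_cases hkl : k = l <;>
        simp [companion, scalarSubShift, scalarBlockColumn, blockRow, Matrix.mul_apply,
          Matrix.one_apply, h, hij, hs, hkl]

lemma one_sub_sum_companionLastRow (R d : ℕ) (hR : 1 ≤ R) (V : Matrix (Fin d) (Fin d) ℂ)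
    (A B : ℕ → Matrix (Fin d) (Fin d) ℂ) (hAR : IsUnit (A R).det) (E : ℂ) {z : ℂ} (hz : z ≠ 0) :
    1 - ∑ j ∈ Finset.range (2 * R), z⁻¹ ^ (2 * R - j) • companionLastRow R d V A B E j =
      z⁻¹ ^ R • ((A R)⁻¹ * (bloch R d V A B z - E • (1 : Matrix (Fin d) (Fin d) ℂ))) := by
  have hlow : ∑ j ∈ Finset.range R, z⁻¹ ^ (2 * R - j) • companionLastRow R d V A B E j =
      -(z⁻¹ ^ R • ((A R)⁻¹ * ∑ r ∈ Finset.range R, z⁻¹ ^ (r + 1) • B (r + 1))) := by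
    rw [← Finset.sum_range_reflect, Matrix.mul_sum, Finset.smul_sum, ← Finset.sum_neg_distrib]
    refine Finset.sum_congr rfl fun r hr => ?_
    have hr' := Finset.mem_range.mp hr
    have h₁ : R - 1 - r < R := by omega
    have h₂ : 2 * R - (R - 1 - r) = R + (r + 1) := by omega
    have h₃ : R - (R - 1 - r) = r + 1 := by omega
    rw [companionLastRow, if_pos h₁, h₂, h₃, pow_add, smul_neg, Matrix.mul_smul, smul_smul]
  have hmid : z⁻¹ ^ (2 * R - R) • companionLastRow R d V A B E R =
      -(z⁻¹ ^ R • ((A R)⁻¹ * (V - E • (1 : Matrix (Fin d) (Fin d) ℂ)))) := by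
    have h : 2 * R - R = R := by omega
    rw [companionLastRow, if_neg (lt_irrefl R), if_pos rfl, h, smul_neg]
  have hhigh : ∑ r ∈ Finset.range (R - 1),
        z⁻¹ ^ (2 * R - (R + (r + 1))) • companionLastRow R d V A B E (R + (r + 1)) =
      -(z⁻¹ ^ R • ((A R)⁻¹ * ∑ r ∈ Finset.range (R - 1), z ^ (r + 1) • A (r + 1))) := by
    rw [Matrix.mul_sum, Finset.smul_sum, ← Finset.sum_neg_distrib]
    refine Finset.sum_congr rfl fun r hr => ?_
    have hr' := Finset.mem_range.mp hr
    have h₁ : ¬ R + (r + 1) < R := by omega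
    have h₂ : R + (r + 1) ≠ R := by omega
    have h₃ : z⁻¹ ^ (2 * R - (R + (r + 1))) = z⁻¹ ^ R * z ^ (r + 1) := by
      obtain ⟨k, hk⟩ : ∃ k, R = k + (r + 1) := ⟨R - (r + 1), by omega⟩
      have h₄ : 2 * R - (R + (r + 1)) = k := by omega
      rw [h₄, hk, pow_add, mul_assoc, ← mul_pow, inv_mul_cancel₀ hz, one_pow, mul_one]
    rw [companionLastRow, if_neg h₁, if_neg h₂, h₃, Nat.add_sub_cancel_left, smul_neg,
      Matrix.mul_smul, smul_smul]
  have htop : (1 : Matrix (Fin d) (Fin d) ℂ) = z⁻¹ ^ R • ((A R)⁻¹ * (z ^ R • A R)) := by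
    rw [Matrix.mul_smul, smul_smul, ← mul_pow, inv_mul_cancel₀ hz, one_pow, one_smul,
      Matrix.nonsing_inv_mul _ hAR]
  have hsplit : ∑ j ∈ Finset.range (2 * R), z⁻¹ ^ (2 * R - j) • companionLastRow R d V A B E j =
      ∑ j ∈ Finset.range R, z⁻¹ ^ (2 * R - j) • companionLastRow R d V A B E j +
      (∑ r ∈ Finset.range (R - 1),
        z⁻¹ ^ (2 * R - (R + (r + 1))) • companionLastRow R d V A B E (R + (r + 1)) +
      z⁻¹ ^ (2 * R - R) • companionLastRow R d V A B E R) := by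
    have h₁ : Finset.range (2 * R) = Finset.range (R + (R - 1 + 1)) := by congr 1; omega
    rw [h₁, Finset.sum_range_add, Finset.sum_range_succ' _ (R - 1), add_zero]
  have hbloch : bloch R d V A B z = V + (∑ r ∈ Finset.range R, z⁻¹ ^ (r + 1) • B (r + 1) +
      (∑ r ∈ Finset.range (R - 1), z ^ (r + 1) • A (r + 1) + z ^ R • A R)) := by
    obtain ⟨m, rfl⟩ : ∃ m, R = m + 1 := ⟨R - 1, by omega⟩
    rw [Nat.add_sub_cancel, ← Finset.sum_range_succ (fun r => z ^ (r + 1) • A (r + 1)),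
      ← Finset.sum_add_distrib, bloch, Finset.range_eq_Ico,
      Finset.sum_Ico_add' (fun r => z⁻¹ ^ r • B r + z ^ r • A r)]
    rfl
  rw [hsplit, hlow, hmid, hhigh, hbloch]
  nth_rewrite 1 [htop]
  simp only [Matrix.mul_add, Matrix.mul_sub, smul_add, smul_sub]
  abel

theorem companion_charpoly_eval (R d : ℕ) (hR : 1 ≤ R) (hd : 1 ≤ d)
    (V : Matrix (Fin d) (Fin d) ℂ) (A B : ℕ → Matrix (Fin d) (Fin d) ℂ)
    (hAR : IsUnit (A R).det) (E : ℂ) (z : ℂ) (hz : z ≠ 0) :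
    (z • (1 : Matrix (Fin (2 * R) × Fin d) (Fin (2 * R) × Fin d) ℂ)
        - companion R d V A B E).det =
      z ^ (R * d) * (bloch R d V A B z - E • (1 : Matrix (Fin d) (Fin d) ℂ)).det
        / (A R).det := by
  rw [smul_one_sub_companion, det_shift_sub_blockRow _ hz,
    one_sub_sum_companionLastRow R d hR V A B hAR E hz, Matrix.det_smul, Matrix.det_mul,
    Matrix.det_nonsing_inv, Ring.inverse_eq_inv', Fintype.card_fin]
  have hpow : z ^ (2 * R * d) * (z⁻¹ ^ R) ^ d = z ^ (R * d) := by
    rw [← pow_mul, mul_assoc, two_mul, pow_add, mul_assoc, ← mul_pow, mul_inv_cancel₀ hz, one_pow,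
      mul_one]
  rw [← mul_assoc, hpow, div_eq_mul_inv]
  ring
end

section
/- Let R ≥ 1, d ≥ 1, let V, A_1, …, A_R, B_1, …, B_R ∈ M_d(ℂ) with A_R invertible, and let E ∈ ℂ. Then for every nonzero λ ∈ ℂ: λ is an eigenvalue of the companion matrix C_E if and only if E is an eigenvalue of the Bloch Hamiltonian 𝐇(λ). -/
/-!
STATEMENT 7. With `A_R` invertible: a nonzero `λ` is an eigenvalue of the companion
matrix `C_E` if and only if `E` is an eigenvalue of the Bloch Hamiltonian `𝐇(λ)`.
-/

open Matrix Finset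

/-- Multiplying the last block equation of the companion matrix by `A_R` gives
`z ^ R` times the Bloch equation. -/
lemma mul_pow_sub_sum_companionLastRow (R d : ℕ) (hR : 1 ≤ R)
    (V : Matrix (Fin d) (Fin d) ℂ) (A B : ℕ → Matrix (Fin d) (Fin d) ℂ)
    (hAR : IsUnit (A R).det) (E z : ℂ) (hz : z ≠ 0) :
    A R * (z ^ (2 * R) • (1 : Matrix (Fin d) (Fin d) ℂ) -
      ∑ j ∈ range (2 * R), z ^ j • companionLastRow R d V A B E j) =
    z ^ R • (bloch R d V A B z - E • (1 : Matrix (Fin d) (Fin d) ℂ)) := by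
  let c : ℕ → Matrix (Fin d) (Fin d) ℂ := fun j =>
    if j < R then B (R - j) else if j = R then V - E • 1 else A (j - R)
  have hc : ∀ j, A R * companionLastRow R d V A B E j = -c j := by
    intro j
    simp only [companionLastRow, c]
    split_ifs <;> rw [mul_neg, Matrix.mul_nonsing_inv_cancel_left _ _ hAR]
  have hlast : c (2 * R) = A R := by
    simp only [c]
    rw [if_neg (by omega), if_neg (by omega), show 2 * R - R = R by omega]
  have hlow : ∑ j ∈ range R, z ^ j • c j = ∑ j ∈ range R, (z ^ R * z⁻¹ ^ (j + 1)) • B (j + 1) := by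
    rw [← Finset.sum_range_reflect]
    refine Finset.sum_congr rfl fun j hj => ?_
    have hj' := Finset.mem_range.1 hj
    simp only [c]
    rw [if_pos (by omega), show R - (R - 1 - j) = j + 1 by omega]
    congr 1
    have h : z ^ R = z ^ (R - 1 - j) * z ^ (j + 1) := by rw [← pow_add]; congr 1; omega
    rw [h, mul_assoc, ← mul_pow, mul_inv_cancel₀ hz, one_pow, mul_one]
  have hhigh : ∑ k ∈ range (R + 1), z ^ (R + k) • c (R + k) =
      ∑ k ∈ range R, (z ^ R * z ^ (k + 1)) • A (k + 1) + z ^ R • (V - E • 1) := by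
    rw [Finset.sum_range_succ']
    congr 1
    · refine Finset.sum_congr rfl fun k _ => ?_
      simp only [c]
      rw [if_neg (by omega), if_neg (by omega), Nat.add_sub_cancel_left, pow_add]
    · simp [c]
  have hbloch : bloch R d V A B z =
      V + ∑ k ∈ range R, (z⁻¹ ^ (k + 1) • B (k + 1) + z ^ (k + 1) • A (k + 1)) := by
    rw [bloch, Finset.range_eq_Ico,
      Finset.sum_Ico_add' (fun r => z⁻¹ ^ r • B r + z ^ r • A r) 0 R 1]
    rfl
  calc _ = ∑ j ∈ range (2 * R + 1), z ^ j • c j := by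
        rw [mul_sub, Finset.mul_sum, Finset.sum_range_succ, hlast]
        simp only [mul_smul_comm, mul_one, hc, smul_neg, Finset.sum_neg_distrib, sub_neg_eq_add]
        rw [add_comm]
    _ = ∑ j ∈ range R, z ^ j • c j + ∑ k ∈ range (R + 1), z ^ (R + k) • c (R + k) := by
        rw [show 2 * R + 1 = R + (R + 1) by omega, Finset.sum_range_add]
    _ = _ := by
        rw [hlow, hhigh, hbloch, Finset.sum_add_distrib]
        simp only [smul_sub, smul_add, Finset.smul_sum, smul_smul]
        abel

lemma companion_mulVec_of_lt (R d : ℕ) (V : Matrix (Fin d) (Fin d) ℂ)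
    (A B : ℕ → Matrix (Fin d) (Fin d) ℂ) (E : ℂ) (x : Fin (2 * R) × Fin d → ℂ)
    (i : ℕ) (hi : i + 1 < 2 * R) (a : Fin d) :
    (companion R d V A B E *ᵥ x) (⟨i, by omega⟩, a) = x (⟨i + 1, hi⟩, a) := by
  rw [Matrix.mulVec, dotProduct, Finset.sum_eq_single (⟨i + 1, hi⟩, a)]
  · simp [companion, hi.ne]
  · rintro ⟨j, b⟩ - hne
    simp only [companion, hi.ne, if_false]
    split_ifs with h
    · have hab : a ≠ b := by
        rintro rfl
        exact hne (Prod.ext (Fin.ext h) rfl)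
      simp [hab]
    · simp
  · simp

/-- The last block of the companion matrix applied to the vector with blocks `z ^ j • u`. -/
lemma companion_mulVec_last (R d : ℕ) (V : Matrix (Fin d) (Fin d) ℂ)
    (A B : ℕ → Matrix (Fin d) (Fin d) ℂ) (E z : ℂ) (u : Fin d → ℂ)
    (i : Fin (2 * R)) (hi : (i : ℕ) + 1 = 2 * R) (a : Fin d) :
    (companion R d V A B E *ᵥ fun p => z ^ (p.1 : ℕ) * u p.2) (i, a) =
      ((∑ j ∈ range (2 * R), z ^ j • companionLastRow R d V A B E j) *ᵥ u) a := by
  rw [Matrix.mulVec, dotProduct, Fintype.sum_prod_type, Matrix.sum_mulVec, Finset.sum_apply,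
    Finset.sum_range]
  refine Finset.sum_congr rfl fun j _ => ?_
  simp only [companion, hi, if_true, Matrix.mulVec, dotProduct]
  exact Finset.sum_congr rfl fun b _ => by rw [Matrix.smul_apply, smul_eq_mul]; ring

lemma sum_companionLastRow_mulVec_eq_iff (R d : ℕ) (hR : 1 ≤ R)
    (V : Matrix (Fin d) (Fin d) ℂ) (A B : ℕ → Matrix (Fin d) (Fin d) ℂ)
    (hAR : IsUnit (A R).det) (E z : ℂ) (hz : z ≠ 0) (u : Fin d → ℂ) :
    (∑ j ∈ range (2 * R), z ^ j • companionLastRow R d V A B E j) *ᵥ u = z ^ (2 * R) • u ↔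
      bloch R d V A B z *ᵥ u = E • u := by
  have key := congrArg (· *ᵥ u) (mul_pow_sub_sum_companionLastRow R d hR V A B hAR E z hz)
  simp only [← Matrix.mulVec_mulVec, Matrix.sub_mulVec, Matrix.smul_mulVec,
    Matrix.one_mulVec] at key
  constructor
  · intro h
    rw [h, sub_self, Matrix.mulVec_zero] at key
    exact sub_eq_zero.1 ((smul_eq_zero.1 key.symm).resolve_left (pow_ne_zero R hz))
  · intro h
    rw [h, sub_self, smul_zero] at key
    have hinj := Matrix.mulVec_injective_of_isUnit ((Matrix.isUnit_iff_isUnit_det _).2 hAR)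
    exact (sub_eq_zero.1 (hinj (key.trans (Matrix.mulVec_zero _).symm))).symm

theorem companion_eigenvalue_iff_bloch_eigenvalue (R d : ℕ) (hR : 1 ≤ R) (hd : 1 ≤ d)
    (V : Matrix (Fin d) (Fin d) ℂ) (A B : ℕ → Matrix (Fin d) (Fin d) ℂ)
    (hAR : IsUnit (A R).det) (E : ℂ) (z : ℂ) (hz : z ≠ 0) :
    (∃ x : Fin (2 * R) × Fin d → ℂ, x ≠ 0 ∧ (companion R d V A B E).mulVec x = z • x) ↔
    (∃ u : Fin d → ℂ, u ≠ 0 ∧ (bloch R d V A B z).mulVec u = E • u) := by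
  constructor
  · rintro ⟨x, hx0, hx⟩
    let u : Fin d → ℂ := fun a => x (⟨0, by omega⟩, a)
    have hpow : ∀ (i : ℕ) (hi : i < 2 * R) (a : Fin d), x (⟨i, hi⟩, a) = z ^ i * u a := by
      intro i
      induction i with
      | zero => intro _ a; simp [u]
      | succ i ih =>
        intro hi a
        rw [← companion_mulVec_of_lt R d V A B E x i hi a, hx, Pi.smul_apply, smul_eq_mul,
          ih (by omega) a]
        ring
    have hxu : x = fun p => z ^ (p.1 : ℕ) * u p.2 := by
      ext ⟨i, a⟩
      exact hpow i i.2 a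
    refine ⟨u, ?_, ?_⟩
    · intro hu
      exact hx0 (by rw [hxu]; ext p; simp [hu])
    · rw [← sum_companionLastRow_mulVec_eq_iff R d hR V A B hAR E z hz]
      ext a
      rw [← companion_mulVec_last R d V A B E z u ⟨2 * R - 1, by omega⟩
        (Nat.sub_add_cancel (by omega)) a, ← hxu, hx, Pi.smul_apply, Pi.smul_apply, hpow,
        smul_eq_mul, smul_eq_mul, ← mul_assoc, ← pow_succ', Nat.sub_add_cancel (by omega)]
  · rintro ⟨u, hu0, hu⟩
    refine ⟨fun p => z ^ (p.1 : ℕ) * u p.2, ?_, ?_⟩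
    · intro h
      refine hu0 (funext fun a => ?_)
      simpa using congrFun h (⟨0, by omega⟩, a)
    · ext ⟨⟨i, hi⟩, a⟩
      by_cases hlast : i + 1 = 2 * R
      · rw [companion_mulVec_last R d V A B E z u _ hlast,
          (sum_companionLastRow_mulVec_eq_iff R d hR V A B hAR E z hz u).2 hu]
        simp only [Pi.smul_apply, smul_eq_mul, ← hlast]
        ring
      · rw [companion_mulVec_of_lt R d V A B E _ i (by omega) a]
        simp only [Pi.smul_apply, smul_eq_mul]
        ring
end

section
/- Assume V = V*, B_r = A_r* for all r, A_R is invertible, and let E ∈ ℝ. If ψ : ℤ → ℂ^d is square-summable (Σ_{n∈ℤ} ‖ψₙ‖² < ∞) and satisfies V_E·ψₙ + Σ_{r=1}^R (A_r*·ψ_{n−r} + A_r·ψ_{n+r}) = 0 for all n ∈ ℤ, then ψ = 0. In other words, the self-adjoint bulk Hamiltonian with invertible top hopping term A_R has no point spectrum. -/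
/-!
STATEMENT 11.  A self-adjoint bulk Hamiltonian (`V = V*`, hoppings `A_r` with
`B_r = A_r*`) with `A_R` invertible has no point spectrum: if `ψ : ℤ → ℂ^d` is
square-summable and `V_E·ψₙ + ∑_{r=1}^R (A_r*·ψ_{n−r} + A_r·ψ_{n+r}) = 0` for all
`n ∈ ℤ` (i.e. `Hψ = Eψ` with `E ∈ ℝ`), then `ψ = 0`.
-/

open Matrix Finset

/-- The solutions of the finite-range recurrence
`M ψₙ + ∑_{r=1}^R (B_r ψ_{n-r} + A_r ψ_{n+r}) = 0` that tend to zero at infinity. -/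
def decayingSolutions {d : ℕ} (R : ℕ) (M : Matrix (Fin d) (Fin d) ℂ)
    (A B : ℕ → Matrix (Fin d) (Fin d) ℂ) : Submodule ℂ (ℤ → Fin d → ℂ) where
  carrier := {ψ | (∀ n : ℤ, M *ᵥ ψ n +
      ∑ r ∈ Icc 1 R, (B r *ᵥ ψ (n - (r : ℤ)) + A r *ᵥ ψ (n + (r : ℤ))) = 0) ∧
    Filter.Tendsto ψ Filter.cofinite (nhds 0)}
  add_mem' := by
    rintro φ ψ ⟨hφ, hφ'⟩ ⟨hψ, hψ'⟩
    refine ⟨fun n => ?_, add_zero (0 : Fin d → ℂ) ▸ hφ'.add hψ'⟩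
    have h := congrArg₂ (· + ·) (hφ n) (hψ n)
    simp only [add_zero] at h
    rw [← h]
    simp only [Pi.add_apply, mulVec_add, sum_add_distrib]
    abel
  zero_mem' := ⟨fun n => by simp, tendsto_const_nhds⟩
  smul_mem' := by
    rintro c ψ ⟨hψ, hψ'⟩
    refine ⟨fun n => ?_, smul_zero (A := Fin d → ℂ) c ▸ hψ'.const_smul c⟩
    have h := congrArg (c • ·) (hψ n)
    simpa only [Pi.smul_apply, mulVec_smul, smul_add, smul_sum, smul_zero] using h

/-- A solution of the recurrence with invertible extreme hoppings vanishes as soon as it vanishes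
on `2R` consecutive sites. -/
theorem eq_zero_of_recurrence_of_eq_zero_window {d R : ℕ} (hR : 1 ≤ R)
    {M : Matrix (Fin d) (Fin d) ℂ} {A B : ℕ → Matrix (Fin d) (Fin d) ℂ}
    (hA : IsUnit (A R).det) (hB : IsUnit (B R).det) {ψ : ℤ → Fin d → ℂ}
    (hrec : ∀ n : ℤ, M *ᵥ ψ n +
      ∑ r ∈ Icc 1 R, (B r *ᵥ ψ (n - (r : ℤ)) + A r *ᵥ ψ (n + (r : ℤ))) = 0)
    (hzero : ∀ n : ℤ, 0 ≤ n → n < 2 * R → ψ n = 0) : ψ = 0 := by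
  have cancel {C : Matrix (Fin d) (Fin d) ℂ} (hC : IsUnit C.det) {v : Fin d → ℂ}
      (h : C *ᵥ v = 0) : v = 0 :=
    mulVec_injective_of_isUnit ((isUnit_iff_isUnit_det C).2 hC) (by simpa using h)
  have window (k : ℕ) : ∀ n : ℤ, -(k : ℤ) ≤ n → n < 2 * R + k → ψ n = 0 := by
    induction k with
    | zero => intro n h₁ h₂; exact hzero n (by simpa using h₁) (by simpa using h₂)
    | succ k ih =>
      intro n h₁ h₂
      push_cast at h₁ h₂
      by_cases hlo : n < -(k : ℤ)
      · have h := hrec (n + R)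
        rw [ih (n + R) (by omega) (by omega), mulVec_zero, zero_add,
          sum_eq_single_of_mem R (by simp [hR])] at h
        · rw [ih (n + R + R) (by omega) (by omega), mulVec_zero, add_zero,
            add_sub_cancel_right] at h
          exact cancel hB h
        · intro r hr hne
          rw [mem_Icc] at hr
          rw [ih (n + R - r) (by omega) (by omega), ih (n + R + r) (by omega) (by omega)]
          simp
      by_cases hhi : 2 * (R : ℤ) + k ≤ n
      · have h := hrec (n - R)
        rw [ih (n - R) (by omega) (by omega), mulVec_zero, zero_add,
          sum_eq_single_of_mem R (by simp [hR])] at h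
        · rw [ih (n - R - R) (by omega) (by omega), mulVec_zero, zero_add,
            sub_add_cancel] at h
          exact cancel hA h
        · intro r hr hne
          rw [mem_Icc] at hr
          rw [ih (n - R - r) (by omega) (by omega), ih (n - R + r) (by omega) (by omega)]
          simp
      exact ih n (by omega) (by omega)
  funext n
  exact window n.natAbs n (by omega) (by omega)

theorem finiteDimensional_decayingSolutions {d R : ℕ} (hR : 1 ≤ R)
    {M : Matrix (Fin d) (Fin d) ℂ} {A B : ℕ → Matrix (Fin d) (Fin d) ℂ}
    (hA : IsUnit (A R).det) (hB : IsUnit (B R).det) :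
    FiniteDimensional ℂ (decayingSolutions R M A B) := by
  let restr : decayingSolutions R M A B →ₗ[ℂ] (Fin (2 * R) → Fin d → ℂ) :=
    LinearMap.funLeft ℂ (Fin d → ℂ) (fun i : Fin (2 * R) => (i : ℤ)) ∘ₗ
      (decayingSolutions R M A B).subtype
  refine FiniteDimensional.of_injective restr ((injective_iff_map_eq_zero restr).2 ?_)
  intro ψ hψ
  refine Subtype.ext (eq_zero_of_recurrence_of_eq_zero_window hR hA hB ψ.2.1 fun n h₀ h₁ => ?_)
  lift n to ℕ using h₀
  exact congrFun hψ ⟨n, by omega⟩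

/-- A two-sided geometric sequence that tends to zero at infinity vanishes. -/
theorem eq_zero_of_shift_eq_smul_of_tendsto {X : Type*} [NormedAddCommGroup X] [NormedSpace ℂ X]
    {φ : ℤ → X} {z : ℂ} (hz : ∀ n, φ (n + 1) = z • φ n)
    (hφ : Filter.Tendsto φ Filter.cofinite (nhds 0)) : φ = 0 := by
  have hpow (n : ℤ) (k : ℕ) : φ (n + k) = z ^ k • φ n := by
    induction k with
    | zero => simp
    | succ k ih => rw [Nat.cast_succ, ← add_assoc, hz, ih, smul_smul, pow_succ']
  have hright (m : ℤ) : Filter.Tendsto (fun k : ℕ => φ (m + k)) Filter.atTop (nhds 0) := by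
    rw [← Nat.cofinite_eq_atTop]
    exact hφ.comp (Function.Injective.tendsto_cofinite fun a b h => by simpa using h)
  have hleft (m : ℤ) : Filter.Tendsto (fun k : ℕ => φ (m - k)) Filter.atTop (nhds 0) := by
    rw [← Nat.cofinite_eq_atTop]
    exact hφ.comp (Function.Injective.tendsto_cofinite fun a b h => by simpa using h)
  funext m
  have hprod (k : ℕ) : ‖φ (m + k)‖ * ‖φ (m - k)‖ = ‖φ m‖ * ‖φ m‖ := by
    have h := hpow (m - k) k
    rw [sub_add_cancel] at h
    rw [hpow m k, norm_smul, mul_right_comm, ← norm_smul, ← h]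
  have hlim := (hright m).norm.mul (hleft m).norm
  simp only [hprod, norm_zero, mul_zero] at hlim
  simpa using tendsto_nhds_unique tendsto_const_nhds hlim

theorem decayingSolutions_eq_bot {d R : ℕ} (hR : 1 ≤ R)
    {M : Matrix (Fin d) (Fin d) ℂ} {A B : ℕ → Matrix (Fin d) (Fin d) ℂ}
    (hA : IsUnit (A R).det) (hB : IsUnit (B R).det) :
    decayingSolutions R M A B = ⊥ := by
  by_contra hne
  have := finiteDimensional_decayingSolutions (M := M) hR hA hB
  have : Nontrivial (decayingSolutions R M A B) := Submodule.nontrivial_iff_ne_bot.2 hne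
  let shift : Module.End ℂ (ℤ → Fin d → ℂ) := LinearMap.funLeft ℂ (Fin d → ℂ) (· + 1)
  have hshift : ∀ ψ ∈ decayingSolutions R M A B, shift ψ ∈ decayingSolutions R M A B := by
    rintro ψ ⟨hrec, hlim⟩
    refine ⟨fun n => ?_, hlim.comp (add_left_injective (1 : ℤ)).tendsto_cofinite⟩
    simpa only [shift, LinearMap.funLeft_apply, sub_add_eq_add_sub, add_right_comm] using
      hrec (n + 1)
  obtain ⟨z, hz⟩ := Module.End.exists_eigenvalue (shift.restrict hshift)
  obtain ⟨φ, hφ⟩ := hz.exists_hasEigenvector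
  refine hφ.2 (Subtype.ext (eq_zero_of_shift_eq_smul_of_tendsto (z := z) (fun n => ?_) φ.2.2))
  exact congrFun (congrArg Subtype.val hφ.apply_eq_smul) n

theorem bulk_hamiltonian_no_point_spectrum (R d : ℕ) (hR : 1 ≤ R) (hd : 1 ≤ d)
    (V : Matrix (Fin d) (Fin d) ℂ) (A : ℕ → Matrix (Fin d) (Fin d) ℂ)
    (hV : Vᴴ = V) (hAR : IsUnit (A R).det) (E : ℝ)
    (ψ : ℤ → Fin d → ℂ)
    (hsum : Summable fun n : ℤ => ‖ψ n‖ ^ 2)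
    (hrec : ∀ n : ℤ,
      (V - (E : ℂ) • (1 : Matrix (Fin d) (Fin d) ℂ)).mulVec (ψ n) +
        ∑ r ∈ Finset.Icc 1 R,
          ((A r)ᴴ.mulVec (ψ (n - (r : ℤ))) + (A r).mulVec (ψ (n + (r : ℤ)))) = 0) :
    ψ = 0 := by
  have hlim : Filter.Tendsto ψ Filter.cofinite (nhds 0) := by
    rw [tendsto_zero_iff_norm_tendsto_zero]
    simpa using hsum.tendsto_cofinite_zero.sqrt
  have hB : IsUnit (A R)ᴴ.det := by
    rw [det_conjTranspose]
    exact hAR.star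
  have hmem : ψ ∈ decayingSolutions R (V - (E : ℂ) • (1 : Matrix (Fin d) (Fin d) ℂ)) A
      (fun r => (A r)ᴴ) := ⟨hrec, hlim⟩
  rwa [decayingSolutions_eq_bot hR hAR hB, Submodule.mem_bot] at hmem
end

section
/- Let t₁, t₂ ∈ ℝ with 0 < |t₁| < |t₂|. Set V := [[0, t₁],[t₁, 0]] and A := [[0, 0],[t₂, 0]] in M₂(ℂ), and define ψ₀ := 0 and ψₙ := ((−t₁/t₂)ⁿ, 0) ∈ ℂ² for n ≥ 1. Then ψ is nonzero, square-summable (Σₙ ‖ψₙ‖² < ∞), and satisfies A*·ψ_{n−1} + V·ψₙ + A·ψ_{n+1} = 0 for all n ≥ 1; that is, ψ is a zero-energy edge state of the half-space Su–Schrieffer–Heeger Hamiltonian, so 0 is an eigenvalue of that operator. -/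
/-!
STATEMENT 15.  The Su–Schrieffer–Heeger model with `0 < |t₁| < |t₂|`:
`V = [[0, t₁],[t₁, 0]]`, `A = [[0, 0],[t₂, 0]]`.  The sequence `ψ₀ = 0`,
`ψₙ = ((−t₁/t₂)ⁿ, 0)` for `n ≥ 1` is a nonzero, square-summable solution of
`A*·ψ_{n−1} + V·ψₙ + A·ψ_{n+1} = 0` (`n ≥ 1`), i.e. a zero-energy edge state of
the half-space Hamiltonian, so `0` is an eigenvalue of that operator.
-/

open Matrix

theorem ssh_zero_energy_edge_state (t₁ t₂ : ℝ) (h1 : 0 < |t₁|) (h2 : |t₁| < |t₂|) :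
    letI V : Matrix (Fin 2) (Fin 2) ℂ := !![0, (t₁ : ℂ); (t₁ : ℂ), 0]
    letI A : Matrix (Fin 2) (Fin 2) ℂ := !![0, 0; (t₂ : ℂ), 0]
    letI ψ : ℕ → Fin 2 → ℂ := fun n => if n = 0 then 0 else ![(-(t₁ : ℂ) / t₂) ^ n, 0]
    ψ ≠ 0 ∧ (Summable fun n => ‖ψ n‖ ^ 2) ∧
      ∀ n : ℕ, 1 ≤ n →
        Aᴴ.mulVec (ψ (n - 1)) + V.mulVec (ψ n) + A.mulVec (ψ (n + 1)) = 0 := by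
  have ht₁ : (t₁ : ℂ) ≠ 0 := by exact_mod_cast abs_pos.mp h1
  have ht₂ : (t₂ : ℂ) ≠ 0 := by exact_mod_cast abs_pos.mp (h1.trans h2)
  refine ⟨fun h => ?_, ?_, fun n hn => ?_⟩
  · have h₀ := congrFun (congrFun h 1) 0
    simp [ht₁, ht₂] at h₀
  · have hr : ‖-(t₁ : ℂ) / t₂‖ < 1 := by
      rw [norm_div, norm_neg, Complex.norm_real, Complex.norm_real, Real.norm_eq_abs,
        Real.norm_eq_abs]
      exact (div_lt_one (h1.trans h2)).mpr h2
    have hr₂ : ‖-(t₁ : ℂ) / t₂‖ ^ 2 < 1 := pow_lt_one₀ (norm_nonneg _) hr two_ne_zero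
    refine Summable.of_nonneg_of_le (fun n => by positivity) (fun n => ?_)
      (summable_geometric_of_lt_one (sq_nonneg _) hr₂)
    rw [pow_right_comm, ← norm_pow (-(t₁ : ℂ) / t₂)]
    gcongr
    refine (pi_norm_le_iff_of_nonneg (norm_nonneg _)).mpr fun i => ?_
    beta_reduce
    split_ifs
    · simp [-norm_pow, -norm_div]
    · fin_cases i <;> simp [-norm_pow, -norm_div]
  · have hn₀ : n ≠ 0 := Nat.one_le_iff_ne_zero.mp hn
    ext i
    fin_cases i
    · by_cases hm : n - 1 = 0 <;> simp [hn₀, hm, vecHead]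
    · have hr : (t₂ : ℂ) * (-(t₁ : ℂ) / t₂) = -t₁ := mul_div_cancel₀ _ ht₂
      by_cases hm : n - 1 = 0 <;> simp [hn₀, hm, vecHead, vecTail, pow_succ] <;>
        linear_combination (-(t₁ : ℂ) / t₂) ^ n * hr
end

section
/- Let θ ∈ ℝ and set μ := −e^{−iθ}/2, V := [[0, 1],[1, 0]], and A := e^{iθ}·[[0, 1/4],[1, 0]] in M₂(ℂ). Define ψ₀ := 0 and ψₙ := (n·μ^{n−1}, 0) ∈ ℂ² for n ≥ 1. Then: (i) ψ is square-summable and satisfies A*·ψ_{n−1} + V·ψₙ + A·ψ_{n+1} = 0 for all n ≥ 1, so ψ is a zero-energy edge state of the half-space Hamiltonian Ȟ(V, A); and (ii) ψ is not a superposition of exponential ansatz modes: there exist no λ₁, λ₂, c₁, c₂ ∈ ℂ such that n·μ^{n−1} = c₁·λ₁ⁿ + c₂·λ₂ⁿ for all n ≥ 1. -/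
/-!
STATEMENT 16.  For `θ ∈ ℝ`, `μ = −e^{−iθ}/2`, `V = [[0,1],[1,0]]`,
`A = e^{iθ}·[[0,1/4],[1,0]]`: the sequence `ψ₀ = 0`, `ψₙ = (n·μ^{n−1}, 0)` for
`n ≥ 1` is a square-summable zero-energy edge state of the half-space Hamiltonian
`Ȟ(V, A)`, and it is not a superposition of exponential-ansatz modes: no
`λ₁, λ₂, c₁, c₂ ∈ ℂ` satisfy `n·μ^{n−1} = c₁·λ₁ⁿ + c₂·λ₂ⁿ` for all `n ≥ 1`.
-/

open Matrix

/-- The sequence `n * μ ^ (n - 1)`, a resonant solution of a two-term recurrence with double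
root `μ ≠ 0`, is not a combination of two geometric sequences. -/
theorem not_exists_mul_pow_eq_add_geometric {K : Type*} [Field K] {μ : K} (hμ : μ ≠ 0) :
    ¬ ∃ (l₁ l₂ c₁ c₂ : K), ∀ n : ℕ, 1 ≤ n →
        (n : K) * μ ^ (n - 1) = c₁ * l₁ ^ n + c₂ * l₂ ^ n := by
  rintro ⟨l₁, l₂, c₁, c₂, h⟩
  have h1 := h 1 (by norm_num)
  have h2 := h 2 (by norm_num)
  have h3 := h 3 (by norm_num)
  have h4 := h 4 (by norm_num)
  norm_num at h1 h2 h3 h4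
  have r3 : 3 * μ ^ 2 = (l₁ + l₂) * (2 * μ) - l₁ * l₂ := by
    linear_combination h3 - (l₁ + l₂) * h2 + l₁ * l₂ * h1
  have r4 : 4 * μ ^ 3 = (l₁ + l₂) * (3 * μ ^ 2) - l₁ * l₂ * (2 * μ) := by
    linear_combination h4 - (l₁ + l₂) * h3 + l₁ * l₂ * h2
  have hs : l₁ + l₂ = 2 * μ := by
    apply mul_left_cancel₀ (pow_ne_zero 2 hμ)
    linear_combination r4 - 2 * μ * r3
  have hp : l₁ * l₂ = μ ^ 2 := by
    linear_combination 2 * μ * hs + r3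
  have e1 : l₁ = μ := by
    have : (l₁ - μ) ^ 2 = 0 := by linear_combination l₁ * hs - hp
    exact sub_eq_zero.mp (pow_eq_zero_iff two_ne_zero |>.mp this)
  have e2 : l₂ = μ := by linear_combination hs - e1
  subst e1
  subst e2
  exact hμ (by linear_combination h2 - l₂ * h1)

/-- The squares of `n * μ ^ (n - 1)` are summable when `‖μ‖ < 1`. -/
theorem summable_norm_mul_pow_pred_sq {μ : ℂ} (hμ : ‖μ‖ < 1) :
    Summable fun n : ℕ => ‖(n : ℂ) * μ ^ (n - 1)‖ ^ 2 := by
  rw [← summable_nat_add_iff 1]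
  have hr : ‖‖μ‖ ^ 2‖ < 1 := by
    rw [norm_pow, norm_norm]
    exact pow_lt_one₀ (norm_nonneg _) hμ two_ne_zero
  have h0 := summable_pow_mul_geometric_of_norm_lt_one 0 hr
  have h1 := summable_pow_mul_geometric_of_norm_lt_one 1 hr
  have h2 := summable_pow_mul_geometric_of_norm_lt_one 2 hr
  refine ((h2.add (h1.mul_left 2)).add h0).congr fun n => ?_
  rw [norm_mul, norm_pow, Complex.norm_natCast, Nat.add_sub_cancel]
  push_cast
  ring

theorem edge_state_not_exponential (θ : ℝ) :
    letI μ : ℂ := -Complex.exp (-(θ : ℂ) * Complex.I) / 2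
    letI V : Matrix (Fin 2) (Fin 2) ℂ := !![0, 1; 1, 0]
    letI A : Matrix (Fin 2) (Fin 2) ℂ :=
      Complex.exp ((θ : ℂ) * Complex.I) • !![0, 1 / 4; 1, 0]
    letI ψ : ℕ → Fin 2 → ℂ := fun n => if n = 0 then 0 else ![(n : ℂ) * μ ^ (n - 1), 0]
    (Summable fun n => ‖ψ n‖ ^ 2) ∧
    (∀ n : ℕ, 1 ≤ n →
      Aᴴ.mulVec (ψ (n - 1)) + V.mulVec (ψ n) + A.mulVec (ψ (n + 1)) = 0) ∧
    ¬ ∃ (l₁ l₂ c₁ c₂ : ℂ), ∀ n : ℕ, 1 ≤ n →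
        (n : ℂ) * μ ^ (n - 1) = c₁ * l₁ ^ n + c₂ * l₂ ^ n := by
  have hexp : Complex.exp ((θ : ℂ) * Complex.I) * Complex.exp (-(θ : ℂ) * Complex.I) = 1 := by
    rw [← Complex.exp_add]
    simp
  have hconj : (starRingEnd ℂ) (Complex.exp ((θ : ℂ) * Complex.I))
      = Complex.exp (-(θ : ℂ) * Complex.I) := by
    rw [← Complex.exp_conj]
    simp
  have hnorm : ‖-Complex.exp (-(θ : ℂ) * Complex.I) / 2‖ < 1 := by
    rw [norm_div, norm_neg, ← Complex.ofReal_neg, Complex.norm_exp_ofReal_mul_I]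
    norm_num
  refine ⟨?_, ?_, not_exists_mul_pow_eq_add_geometric (by simp [Complex.exp_ne_zero])⟩
  · refine (summable_norm_mul_pow_pred_sq hnorm).congr fun n => ?_
    rcases n with _ | n
    · simp
    · simp [Pi.norm_def, Fin.univ_succ]
  · intro n hn
    generalize Complex.exp ((θ : ℂ) * Complex.I) = w at hexp hconj ⊢
    generalize Complex.exp (-(θ : ℂ) * Complex.I) = z at hexp hconj ⊢
    obtain ⟨m, rfl⟩ := Nat.exists_eq_add_of_le' hn
    ext i
    fin_cases i
    · rcases m with _ | m <;> simp [vecHead]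
    · rcases m with _ | m
      · simp [vecHead]
        linear_combination -hexp
      · simp [vecHead, vecTail, hconj]
        linear_combination (-z / 2) ^ m * z / 4 * ((m : ℂ) + 3) * hexp
end
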